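/- arXiv:1207.5822 — 4 statements merged into one kernel-verified Lean document; each statement's English description precedes it below -/
import Mathlib

section
/- Let κ be an inaccessible cardinal, η < κ an ordinal, and ⟨p_ξ : ξ < η⟩ a ⊆-decreasing sequence of perfect κ-trees. Then the intersection ⋂_{ξ<η} p_ξ is a perfect κ-tree, and hence is a lower bound of the sequence. In particular, the poset Sacks(κ) of perfect κ-trees ordered by inclusion is <κ-closed. -/
open Set Cardinal

noncomputable section

/-- A node of the binary tree `2^{<κ}`: a binary sequence of ordinal length `len < κ`,
coded as a function on all ordinals that takes the value `false` from `len` onwards. -/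
structure BNode (κ : Cardinal.{0}) : Type 1 where
  len : Ordinal.{0}
  len_lt : len < κ.ord
  val : Ordinal.{0} → Bool
  val_false : ∀ i, len ≤ i → val i = false

namespace BNode

variable {κ : Cardinal.{0}}

/-- `s.Ext t` means that `t` extends `s`, i.e. `s ⊆ t` as partial functions
(`s` is an initial segment of `t`). -/
def Ext (s t : BNode κ) : Prop :=
  s.len ≤ t.len ∧ ∀ i, i < s.len → t.val i = s.val i

/-- `s.snoc b` is the concatenation `s⌢b`.  (When `κ` is an infinite cardinal the
`dite` always takes the first branch, since `κ.ord` is a limit ordinal.) -/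
def snoc (s : BNode κ) (b : Bool) : BNode κ :=
  if h : s.len + 1 < κ.ord then
    { len := s.len + 1
      len_lt := h
      val := fun i => if i < s.len then s.val i else if i = s.len then b else false
      val_false := by
        intro i hi
        have h1 : s.len < i :=
          lt_of_lt_of_le (by rw [Ordinal.add_one_eq_succ]; exact Order.lt_succ _) hi
        simp [not_lt_of_gt h1, h1.ne'] }
  else s

end BNode

/-- `C` is a closed unbounded subset of the ordinal `L`. -/
def IsClubIn (L : Ordinal.{0}) (C : Set Ordinal.{0}) : Prop :=
  (∀ c ∈ C, c < L) ∧
  (∀ o, o < L → o ≠ 0 → (∀ i, i < o → ∃ c ∈ C, i < c ∧ c < o) → o ∈ C) ∧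
  (∀ i, i < L → ∃ c ∈ C, i < c)

/-- `s` splits in `p`: both `s⌢0` and `s⌢1` belong to `p`. -/
def Splits {κ : Cardinal.{0}} (p : Set (BNode κ)) (s : BNode κ) : Prop :=
  s.snoc false ∈ p ∧ s.snoc true ∈ p

/-- `C` is a splitting club for `p`: a closed unbounded subset of `κ` such that a node
`s ∈ p` splits in `p` if and only if `length s ∈ C`. -/
def IsSplitClub {κ : Cardinal.{0}} (p : Set (BNode κ)) (C : Set Ordinal.{0}) : Prop :=
  IsClubIn κ.ord C ∧ ∀ s ∈ p, (Splits p s ↔ s.len ∈ C)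

/-- `p ⊆ 2^{<κ}` is a perfect `κ`-tree:
(1) closed under initial segments;
(2) closed under unions of `⊆`-increasing chains of length `< κ` (the union being the
unique node `u` extending every member of the chain and whose length is the supremum
of the lengths);
(3) every node has a splitting extension;
(4) there is a club `C ⊆ κ` such that a node of `p` splits iff its length lies in `C`. -/
def IsPerfectTree {κ : Cardinal.{0}} (p : Set (BNode κ)) : Prop :=
  (∀ t ∈ p, ∀ s : BNode κ, s.Ext t → s ∈ p) ∧
  (∀ η : Ordinal.{0}, η < κ.ord → ∀ f : Ordinal.{0} → BNode κ,
      (∀ α β, α < β → β < η → (f α).Ext (f β)) →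
      (∀ α, α < η → f α ∈ p) →
      ∀ u : BNode κ, (∀ α, α < η → (f α).Ext u) →
        (∀ i, i < u.len → ∃ α, α < η ∧ i < (f α).len) → u ∈ p) ∧
  (∀ s ∈ p, ∃ t ∈ p, s.Ext t ∧ Splits p t) ∧
  (∃ C : Set Ordinal.{0}, IsSplitClub p C)

/-- The canonical splitting club of `p`: the set of lengths of splitting nodes of `p`.
For a perfect `κ`-tree (with `κ` inaccessible) this coincides with the unique
splitting club `C(p)`. -/
def splitClub {κ : Cardinal.{0}} (p : Set (BNode κ)) : Set Ordinal.{0} :=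
  {o | ∃ s ∈ p, s.len = o ∧ Splits p s}

/-- `Split_i(p)`: the nodes of `p` whose length is the `i`-th element of the increasing
enumeration of the splitting club of `p`. -/
def SplitLev {κ : Cardinal.{0}} (p : Set (BNode κ)) (i : Ordinal.{0}) : Set (BNode κ) :=
  {s ∈ p | s.len = Ordinal.enumOrd (splitClub p) i}

/-- The thinning `p↾s = {t ∈ p : s ⊆ t or t ⊆ s}`. -/
def thinTree {κ : Cardinal.{0}} (p : Set (BNode κ)) (s : BNode κ) : Set (BNode κ) :=
  {t ∈ p | s.Ext t ∨ t.Ext s}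

/-- A condition in `Sacks(κ,λ)`: a `λ`-indexed family of perfect `κ`-trees (coded as a
function on all ordinals which is the full tree `2^{<κ}` off `λ`) whose support
(the set of coordinates where it is not the full tree) has cardinality at most `κ`. -/
def SacksCond (κ lam : Cardinal.{0}) (p : Ordinal.{0} → Set (BNode κ)) : Prop :=
  (∀ α, α < lam.ord → IsPerfectTree (p α)) ∧
  (∀ α, ¬ α < lam.ord → p α = Set.univ) ∧
  #{α : Ordinal.{0} | α < lam.ord ∧ p α ≠ Set.univ} ≤ Cardinal.lift.{1} κ

/-- The (coordinatewise) order on `Sacks(κ,λ)`. -/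
def SacksLe {κ : Cardinal.{0}} (lam : Cardinal.{0}) (p q : Ordinal.{0} → Set (BNode κ)) : Prop :=
  ∀ α, α < lam.ord → p α ⊆ q α

/-- The forcing `Sacks(κ,λ)` as a partial order. -/
def SacksProd (κ lam : Cardinal.{0}) : Type 1 :=
  {p : Ordinal.{0} → Set (BNode κ) // SacksCond κ lam p}

instance SacksProd.instPartialOrder (κ lam : Cardinal.{0}) : PartialOrder (SacksProd κ lam) where
  le p q := ∀ α, p.1 α ⊆ q.1 α
  le_refl p α := subset_rfl
  le_trans p q r h1 h2 α := (h1 α).trans (h2 α)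
  le_antisymm p q h1 h2 := Subtype.ext (funext fun α => subset_antisymm (h1 α) (h2 α))

/-- A partial order is almost homogeneous if for any `p, q` there is an order
automorphism `f` such that `f p` and `q` are compatible. -/
def AlmostHomogeneous (P : Type*) [Preorder P] : Prop :=
  ∀ p q : P, ∃ f : P ≃o P, ∃ r : P, r ≤ f p ∧ r ≤ q

/-- A condition in the Cohen forcing `Add(γ,λ)`: a partial function from `λ × γ` to `2`
(coded as a functional set of triples) of cardinality less than `γ`. -/
def CohenCond (γ lam : Cardinal.{0}) (s : Set (Ordinal.{0} × Ordinal.{0} × Bool)) : Prop :=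
  (∀ x ∈ s, x.1 < lam.ord ∧ x.2.1 < γ.ord) ∧
  (∀ a b u v, (a, b, u) ∈ s → (a, b, v) ∈ s → u = v) ∧
  #s < Cardinal.lift.{1} γ

/-- The Cohen forcing `Add(γ,λ)`, ordered by reverse inclusion. -/
def CohenPoset (γ lam : Cardinal.{0}) : Type 1 := {s // CohenCond γ lam s}

instance CohenPoset.instPartialOrder (γ lam : Cardinal.{0}) : PartialOrder (CohenPoset γ lam) where
  le p q := q.1 ⊆ p.1
  le_refl p := subset_rfl
  le_trans p q r h1 h2 := Set.Subset.trans h2 h1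
  le_antisymm p q h1 h2 := Subtype.ext (subset_antisymm h2 h1)

/-- `q` is an `(S,a)`-thinning of `p`: on each coordinate `ξ ∈ S`, the tree `p ξ` is
thinned below some node on its `a`-th splitting level, and `q` agrees with `p` off `S`. -/
def IsThinning {κ : Cardinal.{0}} (S : Set Ordinal.{0}) (a : Ordinal.{0})
    (p q : Ordinal.{0} → Set (BNode κ)) : Prop :=
  (∀ ξ, ξ ∉ S → q ξ = p ξ) ∧
  ∀ ξ ∈ S, ∃ s ∈ SplitLev (p ξ) a, q ξ = thinTree (p ξ) s

/-- `p` reduces `D`: for some `S ⊆ λ` of size `< κ` and some `a < κ`, every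
`(S,a)`-thinning of `p` belongs to `D`. -/
def ReducesDense (κ lam : Cardinal.{0}) (p : SacksProd κ lam)
    (D : Set (SacksProd κ lam)) : Prop :=
  ∃ S : Set Ordinal.{0}, S ⊆ Set.Iio lam.ord ∧ #S < Cardinal.lift.{1} κ ∧
    ∃ a : Ordinal.{0}, a < κ.ord ∧
      ∀ q : SacksProd κ lam, IsThinning S a p.1 q.1 → q ∈ D

/-! A node `s` of `⋂ p_i` has a successor in every `p_i`; if both `s⌢0` and `s⌢1` fell out of
the intersection, then by directedness they would both be missing from a single `p_i`. So the
intersection has no maximal nodes, and following successors transfinitely, with unions of chains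
at limits, extends every node of the intersection to any prescribed length `< κ`. Fewer than
`cof κ` splitting clubs meet in a club, and a node of the intersection whose length lies in this
club splits in every `p_i`, hence in the intersection; extending a node to such a length gives a
splitting extension. -/

universe u

theorem isClubIn_iff {L : Ordinal.{0}} (hL : Order.IsSuccPrelimit L) {C : Set Ordinal.{0}} :
    IsClubIn L C ↔ C ⊆ Iio L ∧ IsClub ((↑) ⁻¹' C : Set (Iio L)) := by
  constructor
  · rintro ⟨hsub, hclosed, hunbdd⟩
    refine ⟨hsub, fun d hdC hd _ a ha ↦ ?_, fun a ↦ ?_⟩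
    · by_cases had : a ∈ d
      · exact hdC had
      have hlt : ∀ x ∈ d, x < a := fun x hx ↦ (ha.1 hx).lt_of_ne (ne_of_mem_of_not_mem hx had)
      obtain ⟨x, hx⟩ := hd
      refine hclosed a a.2 (pos_of_gt (Subtype.coe_lt_coe.2 (hlt x hx))).ne' fun i hi ↦ ?_
      obtain ⟨c, hc, hic⟩ := (lt_isLUB_iff ha (b := ⟨i, hi.trans a.2⟩)).1 hi
      exact ⟨c, hdC hc, hic, hlt c hc⟩
    · obtain ⟨c, hc, hac⟩ := hunbdd a a.2
      exact ⟨⟨c, hsub c hc⟩, hc, hac.le⟩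
  · rintro ⟨hsub, hclub⟩
    refine ⟨hsub, fun o ho h0 hlim ↦ ?_, fun i hi ↦ ?_⟩
    · let d : Set (Iio L) := {c | (c : Ordinal) ∈ C ∧ (c : Ordinal) < o}
      have hne : d.Nonempty := by
        obtain ⟨c, hc, -, hco⟩ := hlim 0 (pos_iff_ne_zero.2 h0)
        exact ⟨⟨c, hsub hc⟩, hc, hco⟩
      have hlub : IsLUB d ⟨o, ho⟩ := by
        refine ⟨fun c hc ↦ hc.2.le, fun b hb ↦ not_lt.1 fun hbo ↦ ?_⟩
        obtain ⟨c, hc, hbc, hco⟩ := hlim b hbo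
        have hcb : (⟨c, hsub hc⟩ : Iio L) ≤ b := hb ⟨hc, hco⟩
        exact hcb.not_gt hbc
      exact hclub.isLUB_mem (fun c hc ↦ hc.1) hne hlub
    · obtain ⟨c, hc, hic⟩ := hclub.isCofinal ⟨i + 1, hL.add_one_lt hi⟩
      exact ⟨c, hc, Order.add_one_le_iff.1 hic⟩

theorem IsClubIn.iInter {L : Ordinal.{0}} (hL : ℵ₀ < L.cof) {ι : Type u}
    (hι : #ι < Cardinal.lift.{u} L.cof) {C : ι → Set Ordinal.{0}}
    (hC : ∀ i, IsClubIn L (C i)) : IsClubIn L (Iio L ∩ ⋂ i, C i) := by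
  have hlim := (Ordinal.one_lt_cof_iff.1 (one_lt_aleph0.trans hL)).isSuccPrelimit
  have hcof : Order.cof (Iio L) = Cardinal.lift.{1} L.cof := by
    rw [Ordinal.cof_Iio, Ordinal.lift_cof]
  have hclub : IsClub (⋂ i, (↑) ⁻¹' C i : Set (Iio L)) := by
    refine IsClub.iInter ?_ ?_ fun i ↦ ((isClubIn_iff hlim).1 (hC i)).2
    · simpa only [hcof, ne_eq, lift_eq_aleph0] using hL.ne'
    · rw [hcof, lift_lift, ← lift_lift.{u, 1}]
      exact lift_lt.2 hι
  refine (isClubIn_iff hlim).2 ⟨inter_subset_left, ?_⟩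
  rwa [preimage_inter, Subtype.coe_preimage_self, univ_inter, preimage_iInter]

namespace BNode

variable {κ : Cardinal.{0}} {s t : BNode κ} {x : Ordinal.{0} → Bool} {c d : Ordinal.{0}}

theorem Ext.eq_of_len_eq (h : s.Ext t) (hlen : s.len = t.len) : s = t := by
  have hval : s.val = t.val := by
    funext i
    rcases lt_or_ge i s.len with hi | hi
    · exact (h.2 i hi).symm
    · rw [s.val_false i hi, t.val_false i (hlen ▸ hi)]
  cases s
  cases t
  simp_all only

theorem snoc_len (h : s.len + 1 < κ.ord) (b : Bool) : (s.snoc b).len = s.len + 1 := by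
  simp [snoc, h]

theorem Ext.snoc_ext (hst : s.Ext t) (hlt : s.len < t.len) :
    (s.snoc (t.val s.len)).Ext t := by
  have hle : s.len + 1 ≤ t.len := Order.add_one_le_iff.2 hlt
  have h : s.len + 1 < κ.ord := hle.trans_lt t.len_lt
  refine ⟨(snoc_len h _).trans_le hle, fun i hi ↦ ?_⟩
  rw [snoc_len h] at hi
  rcases (Order.lt_add_one_iff.1 hi).lt_or_eq with hi' | rfl
  · simp [snoc, h, hi', hst.2 i hi']
  · simp [snoc, h]

/-- The node of length `c` given by the first `c` values of `x`. -/
def trunc (x : Ordinal.{0} → Bool) (c : Ordinal.{0}) (hc : c < κ.ord) : BNode κ where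
  len := c
  len_lt := hc
  val i := if i < c then x i else false
  val_false _ hi := if_neg hi.not_gt

theorem trunc_val_of_lt (hc : c < κ.ord) {i : Ordinal.{0}} (hi : i < c) :
    (trunc x c hc).val i = x i :=
  if_pos hi

theorem trunc_ext (hc : c < κ.ord) (hct : c ≤ t.len) (hx : ∀ i < c, x i = t.val i) :
    (trunc x c hc).Ext t :=
  ⟨hct, fun i hi ↦ (hx i hi).symm.trans (trunc_val_of_lt hc hi).symm⟩

theorem trunc_ext_trunc (hcd : c ≤ d) (hc : c < κ.ord) (hd : d < κ.ord) :
    (trunc x c hc).Ext (trunc x d hd) :=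
  trunc_ext hc hcd fun _ hi ↦ (trunc_val_of_lt hd (hi.trans_le hcd)).symm

theorem trunc_add_one (hc : c < κ.ord) (hc' : c + 1 < κ.ord) :
    trunc x (c + 1) hc' = (trunc x c hc).snoc (x c) := by
  have hext := (trunc_ext_trunc (x := x) (lt_add_one c).le hc hc').snoc_ext (lt_add_one c)
  have hlast : (trunc x (c + 1) hc').val c = x c := trunc_val_of_lt hc' (lt_add_one c)
  exact hlast ▸ (hext.eq_of_len_eq (snoc_len hc' _)).symm

/-- The branch through `s` which above `s` continues each node `t` by the value `b t`; it is
`false` from `κ` onwards. -/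
def branch (b : BNode κ → Bool) (s : BNode κ) (i : Ordinal.{0}) : Bool :=
  if i < s.len then s.val i
  else if hi : i < κ.ord then
    b { len := i
        len_lt := hi
        val := fun j ↦ if _ : j < i then branch b s j else false
        val_false := fun _ hj ↦ dif_neg hj.not_gt }
  else false
termination_by i

theorem branch_of_lt {b : BNode κ → Bool} {i : Ordinal.{0}} (hi : i < s.len) :
    branch b s i = s.val i := by
  rw [branch, if_pos hi]

theorem branch_of_le {b : BNode κ → Bool} {i : Ordinal.{0}} (hsi : s.len ≤ i)
    (hi : i < κ.ord) : branch b s i = b (trunc (branch b s) i hi) := by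
  rw [branch, if_neg hsi.not_gt, dif_pos hi]
  rfl

theorem ext_trunc_branch {b : BNode κ → Bool} (hsc : s.len ≤ c) (hc : c < κ.ord) :
    s.Ext (trunc (branch b s) c hc) :=
  ⟨hsc, fun _ hi ↦ (trunc_val_of_lt hc (hi.trans_le hsc)).trans (branch_of_lt hi)⟩

end BNode

section Trees

open BNode

variable {κ : Cardinal.{0}} {p : Set (BNode κ)} {s : BNode κ} {c : Ordinal.{0}}

/-- `p` is closed under initial segments: clause (1) of `IsPerfectTree`. -/
def IsInitialClosed (p : Set (BNode κ)) : Prop :=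
  ∀ t ∈ p, ∀ s : BNode κ, s.Ext t → s ∈ p

/-- `p` is closed under unions of increasing chains of length `< κ`: clause (2) of
`IsPerfectTree`, with `u` the union of the chain `f`. -/
def IsChainClosed (p : Set (BNode κ)) : Prop :=
  ∀ η : Ordinal.{0}, η < κ.ord → ∀ f : Ordinal.{0} → BNode κ,
    (∀ α β, α < β → β < η → (f α).Ext (f β)) →
    (∀ α, α < η → f α ∈ p) →
    ∀ u : BNode κ, (∀ α, α < η → (f α).Ext u) →
      (∀ i, i < u.len → ∃ α, α < η ∧ i < (f α).len) → u ∈ p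

/-- `p` is pruned: it has no maximal nodes. -/
def IsPruned (p : Set (BNode κ)) : Prop :=
  ∀ s ∈ p, ∃ b, s.snoc b ∈ p

theorem IsChainClosed.trunc_mem_of_isSuccLimit (hchain : IsChainClosed p)
    {x : Ordinal.{0} → Bool} (hlim : Order.IsSuccLimit c) (hc : c < κ.ord)
    (hmem : ∀ d (hd : d < c), trunc x d (hd.trans hc) ∈ p) : trunc x c hc ∈ p := by
  refine hchain c hc (fun α ↦ trunc x (min α c) ((min_le_right α c).trans_lt hc)) ?_ ?_ _ ?_ ?_
  · exact fun α β hαβ _ ↦ trunc_ext_trunc (min_le_min_right c hαβ.le) _ _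
  · intro α hα
    simpa only [min_eq_left hα.le] using hmem α hα
  · exact fun α _ ↦ trunc_ext_trunc (min_le_right α c) _ _
  · exact fun i hi ↦ ⟨i + 1, hlim.add_one_lt hi, lt_min (lt_add_one i) hi⟩

theorem trunc_branch_mem (hinit : IsInitialClosed p) (hchain : IsChainClosed p)
    {b : BNode κ → Bool} (hb : ∀ t ∈ p, t.snoc (b t) ∈ p) (hs : s ∈ p) (hc : c < κ.ord) :
    trunc (branch b s) c hc ∈ p := by
  induction c using Ordinal.limitRecOn with
  | zero => exact hinit s hs _ (trunc_ext hc zero_le fun i hi ↦ absurd hi not_lt_zero)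
  | add_one d ih =>
    rcases lt_or_ge d s.len with hds | hsd
    · have hle : d + 1 ≤ s.len := Order.add_one_le_iff.2 hds
      exact hinit s hs _ (trunc_ext hc hle fun i hi ↦ branch_of_lt (hi.trans_le hle))
    · have hd : d < κ.ord := (lt_add_one d).trans hc
      rw [trunc_add_one hd hc, branch_of_le hsd hd]
      exact hb _ (ih hd)
  | limit d hlim ih =>
    exact hchain.trunc_mem_of_isSuccLimit hlim hc fun e he ↦ ih e he (he.trans hc)

theorem IsPruned.exists_ext_len_eq (hpruned : IsPruned p) (hinit : IsInitialClosed p)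
    (hchain : IsChainClosed p) (hs : s ∈ p) (hsc : s.len ≤ c) (hc : c < κ.ord) :
    ∃ t ∈ p, s.Ext t ∧ t.len = c := by
  choose! b hb using hpruned
  exact ⟨trunc (branch b s) c hc, trunc_branch_mem hinit hchain hb hs hc,
    ext_trunc_branch hsc hc, rfl⟩

theorem IsPerfectTree.isPruned (hp : IsPerfectTree p) : IsPruned p := by
  intro s hs
  obtain ⟨hinit, -, hsplit, -⟩ := hp
  obtain ⟨t, ht, hst, htsplit⟩ := hsplit s hs
  rcases hst.1.lt_or_eq with hlt | heq
  · exact ⟨_, hinit t ht _ (hst.snoc_ext hlt)⟩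
  · exact ⟨false, hst.eq_of_len_eq heq ▸ htsplit.1⟩

theorem isPerfectTree_iff_isPruned :
    IsPerfectTree p ↔
      IsInitialClosed p ∧ IsChainClosed p ∧ IsPruned p ∧ ∃ C, IsSplitClub p C := by
  refine ⟨fun hp ↦ ⟨hp.1, hp.2.1, hp.isPruned, hp.2.2.2⟩, ?_⟩
  rintro ⟨hinit, hchain, hpruned, C, hC⟩
  refine ⟨hinit, hchain, fun s hs ↦ ?_, C, hC⟩
  obtain ⟨⟨hCκ, -, hunbdd⟩, hsplit⟩ := hC
  obtain ⟨c, hc, hsc⟩ := hunbdd s.len s.len_lt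
  obtain ⟨t, ht, hst, rfl⟩ := hpruned.exists_ext_len_eq hinit hchain hs hsc.le (hCκ c hc)
  exact ⟨t, ht, hst, (hsplit t ht).2 hc⟩

end Trees

section Intersections

variable {κ : Cardinal.{0}} {ι : Type u} {p : ι → Set (BNode κ)}

theorem IsInitialClosed.iInter (hp : ∀ i, IsInitialClosed (p i)) :
    IsInitialClosed (⋂ i, p i) :=
  fun t ht s hst ↦ mem_iInter.2 fun i ↦ hp i t (mem_iInter.1 ht i) s hst

theorem IsChainClosed.iInter (hp : ∀ i, IsChainClosed (p i)) : IsChainClosed (⋂ i, p i) :=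
  fun η hη f hf hfp u hfu hlen ↦ mem_iInter.2 fun i ↦
    hp i η hη f hf (fun α hα ↦ mem_iInter.1 (hfp α hα) i) u hfu hlen

theorem IsPruned.iInter_of_directed (hp : ∀ i, IsPruned (p i)) (hdir : Directed (· ⊇ ·) p) :
    IsPruned (⋂ i, p i) := by
  intro s hs
  by_contra! hout
  simp only [mem_iInter, not_forall] at hout
  choose i hi using hout
  obtain ⟨k, hk_false, hk_true⟩ := hdir (i false) (i true)
  obtain ⟨b, hb⟩ := hp k s (mem_iInter.1 hs k)
  cases b with
  | false => exact hi false (hk_false hb)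
  | true => exact hi true (hk_true hb)

theorem splits_iInter_iff {s : BNode κ} : Splits (⋂ i, p i) s ↔ ∀ i, Splits (p i) s := by
  simp only [Splits, mem_iInter, forall_and]

theorem IsSplitClub.iInter (hκ : ℵ₀ < κ.ord.cof) (hι : #ι < Cardinal.lift.{u} κ.ord.cof)
    {C : ι → Set Ordinal.{0}} (hC : ∀ i, IsSplitClub (p i) (C i)) :
    IsSplitClub (⋂ i, p i) (Iio κ.ord ∩ ⋂ i, C i) := by
  refine ⟨.iInter hκ hι fun i ↦ (hC i).1, fun s hs ↦ ?_⟩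
  have hsplit : ∀ i, Splits (p i) s ↔ s.len ∈ C i := fun i ↦ (hC i).2 s (mem_iInter.1 hs i)
  simp only [splits_iInter_iff, hsplit, mem_inter_iff, mem_Iio, s.len_lt, true_and, mem_iInter]

theorem sacks_lt_kappa_closed_general (hκ : ℵ₀ < κ.ord.cof)
    (hι : #ι < Cardinal.lift.{u} κ.ord.cof) (hp : ∀ i, IsPerfectTree (p i))
    (hdir : Directed (· ⊇ ·) p) : IsPerfectTree (⋂ i, p i) := by
  choose C hC using fun i ↦ (hp i).2.2.2
  exact isPerfectTree_iff_isPruned.2 ⟨.iInter fun i ↦ (hp i).1, .iInter fun i ↦ (hp i).2.1,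
    .iInter_of_directed (fun i ↦ (hp i).isPruned) hdir, _, .iInter hκ hι hC⟩

end Intersections

/-- `Sacks(κ)` is `<κ`-closed: the intersection of a `⊆`-decreasing
sequence of perfect `κ`-trees of length `η < κ` is a perfect `κ`-tree, and hence is a
lower bound of the sequence. -/
theorem sacks_lt_kappa_closed (κ : Cardinal.{0}) (hκ : κ.IsInaccessible)
    (η : Ordinal.{0}) (hη : η < κ.ord) (f : Ordinal.{0} → Set (BNode κ))
    (hperf : ∀ ξ, ξ < η → IsPerfectTree (f ξ))
    (hdec : ∀ ξ ξ', ξ ≤ ξ' → ξ' < η → f ξ' ⊆ f ξ) :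
    IsPerfectTree (⋂ ξ ∈ Set.Iio η, f ξ) ∧
      ∀ ξ, ξ < η → (⋂ ξ ∈ Set.Iio η, f ξ) ⊆ f ξ := by
  have hcof : κ.ord.cof = κ := hκ.isRegular.cof_ord
  have hcard : #(Iio η) < Cardinal.lift.{1} κ.ord.cof := by
    rw [hcof, mk_Iio_ordinal, lift_lt]
    exact lt_ord.1 hη
  have hanti : Antitone fun ξ : Iio η ↦ f ξ := fun ξ ξ' h ↦ hdec ξ ξ' h ξ'.2
  refine ⟨?_, fun ξ hξ ↦ biInter_subset_of_mem hξ⟩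
  rw [biInter_eq_iInter]
  exact sacks_lt_kappa_closed_general (hcof.symm ▸ hκ.aleph0_lt) hcard
    (fun ξ ↦ hperf ξ ξ.2) hanti.directed_ge
end
end

section
/- Let κ be an inaccessible cardinal with 2^κ = κ^+, and let λ be a cardinal. Then every antichain in Sacks(κ,λ) has cardinality at most κ^+ (i.e., Sacks(κ,λ) satisfies the κ^{++}-chain condition). -/
open Set Cardinal

noncomputable section

/-!
Two conditions that agree on their common support are compatible, so an antichain is a family of
partial functions, each of size at most `κ` and with sets of nodes as values, any two of which
disagree at a common point. The number of sets of nodes is at most `μ = 2 ^ (2 ^< κ)`, and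
`μ ^ κ = μ`.

To bound such a family by `μ`, choose for every partial function `s` of size at most `κ` (call it
small) a member `pick s` of the family extending it, if there is one, and let `M` be a set of at
most `μ` pairs (point, value) such that for every small `s ⊆ M` all pairs over the domain of
`pick s` are in `M`. A member `p` cannot disagree with `q = pick (p ∩ M)` at a common point `i`: the
pair `(i, p i)` is in `M`, so it belongs to `q`. Hence `p = q`, and there are at most
`μ ^ κ = μ` traces `p ∩ M`. This replaces the usual appeal to the Δ-system lemma.
-/

universe u

theorem exists_subset_range_of_mk_le {α L : Type u} [Nonempty α] {s : Set α} (h : #s ≤ #L) :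
    ∃ e : L → α, s ⊆ range e := by
  obtain ⟨g⟩ := h
  exact ⟨Function.extend g Subtype.val fun _ => Classical.arbitrary α,
    fun i hi => ⟨g ⟨i, hi⟩, g.injective.extend_apply ..⟩⟩

theorem two_power_le_of_power_le {c μ : Cardinal.{u}} (hμ : ℵ₀ ≤ μ) (hc : μ ^ c ≤ μ) :
    2 ^ c ≤ μ :=
  (power_le_power_right (natCast_le_aleph0.trans hμ)).trans hc

theorem mk_wType_subset_le {K L : Type u} {μ : Cardinal.{u}} (hμ : ℵ₀ ≤ μ) (hK : μ ^ #K ≤ μ)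
    (hL : #L ≤ μ) : #(WType fun a : Set K × L => a.1) ≤ μ := by
  have hlabels : #(Set K × L) ≤ μ := by
    rw [← mul_def, mk_set]
    exact mul_le_of_le hμ (two_power_le_of_power_le hμ hK) hL
  refine WType.cardinalMk_le_of_le ?_
  calc
    sum (fun a : Set K × L => μ ^ #a.1) ≤ sum fun _ : Set K × L => μ :=
      sum_le_sum _ _ fun a =>
        (power_le_power_left (aleph0_pos.trans_le hμ).ne' (mk_set_le a.1)).trans hK
    _ = #(Set K × L) * μ := sum_const' ..
    _ ≤ μ := mul_le_of_le hμ hlabels le_rfl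

theorem exists_closed_set_mk_le {α : Type u} {c μ : Cardinal.{u}} (hμ : ℵ₀ ≤ μ)
    (hc : μ ^ c ≤ μ) (f : Set α → Set α) (hf : ∀ s, #(f s) ≤ μ) :
    ∃ M : Set α, #M ≤ μ ∧ ∀ s ⊆ M, #s ≤ c → f s ⊆ M := by
  rcases isEmpty_or_nonempty α with hα | hα
  · exact ⟨∅, by simp, fun _ _ _ x => isEmptyElim x⟩
  induction c using Cardinal.inductionOn with | _ K
  induction μ using Cardinal.inductionOn with | _ L
  choose e he using fun s => exists_subset_range_of_mk_le (hf s)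
  -- A term is a well-founded recipe for an element of the closure: its subterms name the points
  -- of a small set `s`, and its label picks one of the points in the enumeration `e s` of `f s`.
  let eval : (WType fun a : Set K × L => a.1) → α :=
    WType.elim α fun x => e (range x.2) x.1.2
  refine ⟨range eval, mk_range_le.trans (mk_wType_subset_le hμ hc le_rfl), fun s hs hsK i hi => ?_⟩
  obtain ⟨D, hD⟩ := le_mk_iff_exists_set.1 hsK
  obtain ⟨φ⟩ := Cardinal.eq.1 hD
  choose term hterm using fun x : s => hs x.2
  obtain ⟨l, rfl⟩ := he s hi
  have hrange : range (fun k => eval (term (φ k))) = s := by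
    simp only [hterm]
    exact (φ.surjective.range_comp Subtype.val).trans Subtype.range_coe
  exact ⟨WType.mk (D, l) (term ∘ φ), congrArg (e · l) hrange⟩

theorem mk_le_of_pairwise_disagree {I T A : Type u} {c μ : Cardinal.{u}} (hμ : ℵ₀ ≤ μ)
    (hc : μ ^ c ≤ μ) (hT : #T ≤ μ) (supp : A → Set I) (val : A → I → T)
    (hsupp : ∀ a, #(supp a) ≤ c)
    (hdis : ∀ a b, a ≠ b → ∃ i ∈ supp a ∩ supp b, val a i ≠ val b i) :
    #A ≤ μ := by
  rcases isEmpty_or_nonempty A with hA | hA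
  · simp
  have hcμ : c ≤ μ := (cantor c).le.trans (two_power_le_of_power_le hμ hc)
  let graph (a : A) : Set (I × T) := (fun i => (i, val a i)) '' supp a
  have hgraph (a : A) : #(graph a) ≤ c := mk_image_le.trans (hsupp a)
  let pick (s : Set (I × T)) : A := Classical.epsilon fun a => s ⊆ graph a
  have hpick {s : Set (I × T)} {a : A} (h : s ⊆ graph a) : s ⊆ graph (pick s) :=
    Classical.epsilon_spec (p := fun a => s ⊆ graph a) ⟨a, h⟩
  obtain ⟨M, hM, hclosed⟩ := exists_closed_set_mk_le hμ hc
    (fun s => supp (pick s) ×ˢ (Set.univ : Set T)) fun s => by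
      simpa [mk_setProd] using mul_le_of_le hμ ((hsupp _).trans hcμ) hT
  have hpick_trace (p : A) : pick (graph p ∩ M) = p := by
    by_contra hne
    obtain ⟨i, ⟨hiq, hip⟩, hval⟩ := hdis _ _ hne
    have hiM : (i, val p i) ∈ M := hclosed _ inter_subset_right
      ((mk_le_mk_of_subset inter_subset_left).trans (hgraph p)) ⟨hiq, trivial⟩
    obtain ⟨j, -, hj⟩ := hpick inter_subset_left ⟨mem_image_of_mem _ hip, hiM⟩
    obtain ⟨rfl, hji⟩ := Prod.mk.inj hj
    exact hval hji
  let trace (p : A) : {t : Set (I × T) // t ⊆ M ∧ #t ≤ c} :=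
    ⟨graph p ∩ M, inter_subset_right,
      (mk_le_mk_of_subset inter_subset_left).trans (hgraph p)⟩
  have htrace : Function.LeftInverse (fun t => pick t.1) trace := hpick_trace
  calc
    #A ≤ #{t : Set (I × T) // t ⊆ M ∧ #t ≤ c} := mk_le_of_injective htrace.injective
    _ ≤ max #M ℵ₀ ^ c := mk_bounded_subset_le M c
    _ ≤ μ := (power_le_power_right (max_le hM hμ)).trans hc

theorem le_two_powerlt (c : Cardinal.{u}) : c ≤ 2 ^< c :=
  le_of_forall_lt fun d hd => (cantor d).trans_le (le_powerlt 2 hd)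

theorem two_powerlt_of_isStrongPrelimit {c : Cardinal.{u}} (hc : c.IsStrongPrelimit) :
    2 ^< c = c :=
  (powerlt_le.2 fun _ hd => (hc hd).le).antisymm (le_two_powerlt c)

theorem two_power_two_powerlt_power_self {c : Cardinal.{u}} (hc : ℵ₀ ≤ c) :
    ((2 : Cardinal.{u}) ^ (2 ^< c)) ^ c = 2 ^ (2 ^< c) := by
  have hle := le_two_powerlt c
  rw [← power_mul, mul_eq_left (hc.trans hle) hle (aleph0_pos.trans_le hc).ne']

namespace BNode

variable {κ : Cardinal.{0}}

theorem restrict_injective : Function.Injective fun s : BNode κ =>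
    (⟨⟨s.len, s.len_lt⟩, fun i => s.val i⟩ : Σ o : Iio κ.ord, (Iio o.1 → Bool)) := by
  rintro ⟨l, hl, v, hv⟩ ⟨l', hl', v', hv'⟩ h
  obtain rfl : l = l' := congrArg (fun x => x.1.1) h
  have hrestrict := eq_of_heq (Sigma.mk.inj h).2
  obtain rfl : v = v' := by
    funext i
    rcases lt_or_ge i l with hi | hi
    · exact congrFun hrestrict ⟨i, hi⟩
    · rw [hv i hi, hv' i hi]
  rfl

theorem mk_le_lift_two_powerlt (hκ : ℵ₀ ≤ κ) : #(BNode κ) ≤ lift.{1} (2 ^< κ) := by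
  have hlevel (o : Iio κ.ord) : #(Iio o.1 → Bool) ≤ lift.{1} (2 ^< κ) := by
    simpa [mk_Iio_ordinal] using lift_le.{1}.2 (le_powerlt 2 (lt_ord.1 o.2))
  have hle := le_two_powerlt κ
  calc
    #(BNode κ) ≤ #(Σ o : Iio κ.ord, (Iio o.1 → Bool)) := mk_le_of_injective restrict_injective
    _ ≤ sum fun _ : Iio κ.ord => lift.{1} (2 ^< κ) := (mk_sigma _).trans_le (sum_le_sum _ _ hlevel)
    _ = lift.{1} (κ * 2 ^< κ) := by rw [sum_const', mk_Iio_ordinal, card_ord, lift_mul]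
    _ ≤ lift.{1} (2 ^< κ) := lift_le.2 (mul_le_of_le (hκ.trans hle) hle le_rfl)

end BNode

/-- The support of `p`: the coordinates below `λ` at which `p` is not the full tree. It is defined
for every family `p` of sets of nodes, not only for conditions. -/
def sacksSupp {κ : Cardinal.{0}} (lam : Cardinal.{0}) (p : Ordinal.{0} → Set (BNode κ)) :
    Set Ordinal.{0} :=
  {α | α < lam.ord ∧ p α ≠ Set.univ}

section Conditions

variable {κ lam : Cardinal.{0}} {p q : Ordinal.{0} → Set (BNode κ)}

theorem sacksSupp_inter_subset :
    sacksSupp lam (fun α => p α ∩ q α) ⊆ sacksSupp lam p ∪ sacksSupp lam q := by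
  rintro α ⟨hα, hne⟩
  by_cases hp : p α = Set.univ
  · exact Or.inr ⟨hα, by simpa only [hp, univ_inter] using hne⟩
  · exact Or.inl ⟨hα, hp⟩

theorem SacksCond.inter (hκ : ℵ₀ ≤ κ) (hp : SacksCond κ lam p) (hq : SacksCond κ lam q)
    (hpq : ∀ α ∈ sacksSupp lam p ∩ sacksSupp lam q, p α = q α) :
    SacksCond κ lam fun α => p α ∩ q α := by
  refine ⟨fun α hα => ?_, fun α hα => by simp only [hp.2.1 α hα, hq.2.1 α hα, inter_univ], ?_⟩
  · by_cases hpα : p α = Set.univ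
    · simpa only [hpα, univ_inter] using hq.1 α hα
    by_cases hqα : q α = Set.univ
    · simpa only [hqα, inter_univ] using hp.1 α hα
    · simpa only [← hpq α ⟨⟨hα, hpα⟩, hα, hqα⟩, inter_self] using hp.1 α hα
  · calc
      #(sacksSupp lam fun α => p α ∩ q α) ≤ #(sacksSupp lam p) + #(sacksSupp lam q) :=
        (mk_le_mk_of_subset sacksSupp_inter_subset).trans (mk_union_le _ _)
      _ ≤ lift.{1} κ := add_le_of_le (aleph0_le_lift.2 hκ) hp.2.2 hq.2.2

end Conditions

theorem sacksProd_chain_condition_general (κ lam : Cardinal.{0}) (hκ : ℵ₀ ≤ κ)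
    (A : Set (Ordinal.{0} → Set (BNode κ)))
    (hA : ∀ p ∈ A, SacksCond κ lam p)
    (hanti : ∀ p ∈ A, ∀ q ∈ A, p ≠ q →
      ¬∃ r, SacksCond κ lam r ∧ SacksLe lam r p ∧ SacksLe lam r q) :
    #A ≤ lift.{1} (2 ^ (2 ^< κ)) := by
  have hinf : ℵ₀ ≤ 2 ^ (2 ^< κ) := hκ.trans ((le_two_powerlt κ).trans (cantor _).le)
  have htrees : #(Set (BNode κ)) ≤ lift.{1} (2 ^ (2 ^< κ)) := by
    rw [mk_set, lift_two_power]
    exact power_le_power_left two_ne_zero (BNode.mk_le_lift_two_powerlt hκ)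
  refine mk_le_of_pairwise_disagree (aleph0_le_lift.2 hinf)
    (by rw [← lift_power, two_power_two_powerlt_power_self hκ]) htrees
    (fun p : A => sacksSupp lam p.1) (fun p => p.1) (fun p => (hA p p.2).2.2) fun p q hne => ?_
  by_contra! hagree
  exact hanti p p.2 q q.2 (Subtype.coe_injective.ne hne)
    ⟨_, (hA p p.2).inter hκ (hA q q.2) hagree,
      fun _ _ => inter_subset_left, fun _ _ => inter_subset_right⟩

/-- If `κ` is inaccessible with `2^κ = κ⁺` and `λ` is a cardinal,
then every antichain in `Sacks(κ,λ)` has cardinality at most `κ⁺`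
(the `κ⁺⁺`-chain condition). -/
theorem sacksProd_chain_condition (κ lam : Cardinal.{0}) (hκ : κ.IsInaccessible)
    (hgch : (2 : Cardinal.{0}) ^ κ = Order.succ κ)
    (A : Set (Ordinal.{0} → Set (BNode κ)))
    (hA : ∀ p ∈ A, SacksCond κ lam p)
    (hanti : ∀ p ∈ A, ∀ q ∈ A, p ≠ q →
      ¬∃ r, SacksCond κ lam r ∧ SacksLe lam r p ∧ SacksLe lam r q) :
    #A ≤ Cardinal.lift.{1} (Order.succ κ) := by
  simpa only [two_powerlt_of_isStrongPrelimit hκ.isStrongLimit.isStrongPrelimit, hgch] using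
    sacksProd_chain_condition_general κ lam hκ.isStrongLimit.aleph0_le A hA hanti
end
end

section
/- Let κ be an inaccessible cardinal and λ a cardinal. For every closed unbounded set C ⊆ κ and every set S ⊆ λ with |S| ≤ κ, the set {p⃗ ∈ Sacks(κ,λ) : for all ξ ∈ S, C(p⃗(ξ)) ⊆ C} is dense in Sacks(κ,λ). -/
open Set Cardinal

noncomputable section

/-!
Fix `ξ ∈ S` and let `D` be the splitting club of `q ξ`. Keeping only the nodes that turn left at
every level in `D \ C` destroys all splitting outside `C`, so the remaining tree splits exactly at
the levels in `D ∩ C`, which is a club because `κ` has uncountable cofinality. The point to check is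
that every node still has a splitting extension. A tree that is closed under initial segments and
under unions of short chains and has no terminal nodes has, by Zorn's lemma, nodes of every length
`δ < κ` above each of its nodes of length at most `δ`, in particular nodes with length in `D ∩ C`.
Thinning out in this way at the `≤ κ` coordinates in `S` leaves the support of size at most `κ`.
-/

section Club

open Order

variable {L : Ordinal.{0}} {C D : Set Ordinal.{0}}

theorem isClubIn_iff_isClub_preimage :
    IsClubIn L C ↔ IsSuccPrelimit L ∧ C ⊆ Iio L ∧ IsClub ((↑) ⁻¹' C : Set (Iio L)) := by
  constructor
  · rintro ⟨hsub, hclosed, hunbdd⟩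
    refine ⟨isSuccPrelimit_of_succ_lt fun i hi => ?_, hsub, fun t htC ht _ a ha => ?_,
      fun i => ?_⟩
    · obtain ⟨c, hc, hic⟩ := hunbdd i hi
      exact (succ_le_of_lt hic).trans_lt (hsub c hc)
    · by_contra haC
      have hlt : ∀ x ∈ t, x < a := fun x hx => (ha.1 hx).lt_of_ne fun h => haC (h ▸ htC hx)
      obtain ⟨x, hx⟩ := ht
      refine haC (hclosed a a.2 (pos_of_gt (show x.1 < a.1 from hlt x hx)).ne' fun i hi => ?_)
      obtain ⟨c, hc, hic⟩ := (lt_isLUB_iff ha (b := ⟨i, hi.trans a.2⟩)).1 hi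
      exact ⟨c, htC hc, hic, hlt c hc⟩
    · obtain ⟨c, hc, hic⟩ := hunbdd i i.2
      exact ⟨⟨c, hsub c hc⟩, hc, hic.le⟩
  · rintro ⟨hL, hsub, hclub⟩
    refine ⟨hsub, fun o ho ho0 hacc => ?_, fun i hi => ?_⟩
    · let t : Set (Iio L) := {x | x.1 ∈ C ∧ x.1 < o}
      have hne : t.Nonempty := by
        obtain ⟨c, hc, -, hco⟩ := hacc 0 (pos_iff_ne_zero.2 ho0)
        exact ⟨⟨c, hsub hc⟩, hc, hco⟩
      have hlub : IsLUB t ⟨o, ho⟩ := by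
        refine ⟨fun x hx => hx.2.le, fun b hb => le_of_not_gt fun hbo => ?_⟩
        obtain ⟨c, hc, hbc, hco⟩ := hacc b hbo
        have hcb : (⟨c, hsub hc⟩ : Iio L) ≤ b := hb ⟨hc, hco⟩
        exact hcb.not_gt hbc
      exact hclub.isLUB_mem (fun x hx => hx.1) hne hlub
    · obtain ⟨c, hc, hic⟩ := hclub.isCofinal ⟨succ i, hL.succ_lt hi⟩
      exact ⟨c, hc, (lt_succ i).trans_le hic⟩

theorem IsClubIn.inter (hL : L.cof ≠ ℵ₀) (hC : IsClubIn L C) (hD : IsClubIn L D) :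
    IsClubIn L (C ∩ D) := by
  rw [isClubIn_iff_isClub_preimage] at hC hD ⊢
  have hcof : Order.cof (Iio L) ≠ ℵ₀ := by
    rwa [Ordinal.cof_Iio, ← Ordinal.lift_cof, Ne, lift_eq_aleph0]
  exact ⟨hC.1, inter_subset_left.trans hC.2.1, hC.2.2.inter hcof hD.2.2⟩

end Club

namespace BNode

variable {κ : Cardinal.{0}} {s t : BNode κ} {δ : Ordinal.{0}}

theorem eq_of_ext_of_len_le (h : s.Ext t) (hlen : t.len ≤ s.len) : s = t := by
  obtain ⟨l, hl, v, hv⟩ := s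
  obtain ⟨m, hm, w, hw⟩ := t
  obtain rfl : l = m := h.1.antisymm hlen
  obtain rfl : v = w := funext fun i =>
    (lt_or_ge i l).elim (fun hi => (h.2 i hi).symm) fun hi => (hv i hi).trans (hw i hi).symm
  rfl

/-- The tree order on `2^{<κ}`: `s ≤ t` means that `t` extends `s`. -/
instance : PartialOrder (BNode κ) where
  le := Ext
  le_refl _ := ⟨le_rfl, fun _ _ => rfl⟩
  le_trans _ _ _ hst htu :=
    ⟨hst.1.trans htu.1, fun i hi => (htu.2 i (hi.trans_le hst.1)).trans (hst.2 i hi)⟩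
  le_antisymm _ _ hst hts := eq_of_ext_of_len_le hst hts.1

theorem len_strictMono : StrictMono (len : BNode κ → Ordinal.{0}) := fun _ _ h =>
  lt_of_not_ge fun hlen => h.ne (eq_of_ext_of_len_le h.le hlen)

/-- The initial segment of `s` of length `δ`, or `s` itself if `s` is shorter than `δ`. -/
def take (s : BNode κ) (δ : Ordinal.{0}) : BNode κ where
  len := min δ s.len
  len_lt := (min_le_right _ _).trans_lt s.len_lt
  val i := if i < δ then s.val i else false
  val_false i hi := by
    split_ifs with h
    · exact s.val_false i ((min_le_iff.1 hi).resolve_left h.not_ge)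
    · rfl

theorem take_le (s : BNode κ) (δ : Ordinal.{0}) : s.take δ ≤ s :=
  ⟨min_le_right _ _, fun _ hi => (if_pos (lt_min_iff.1 hi).1).symm⟩

theorem take_le_of_le (h : t ≤ s) (hδ : δ ≤ t.len) : s.take δ ≤ t :=
  ⟨(min_le_left _ _).trans hδ, fun i hi =>
    have hiδ : i < δ := (lt_min_iff.1 hi).1
    (h.2 i (hiδ.trans_le hδ)).symm.trans (if_pos hiδ).symm⟩

theorem take_mono (s : BNode κ) : Monotone s.take := fun γ _ h =>
  ⟨min_le_min_right _ h, fun i hi =>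
    have hiγ : i < γ := (lt_min_iff.1 hi).1
    (if_pos (hiγ.trans_le h)).trans (if_pos hiγ).symm⟩

theorem exists_mem_upperBounds_isLUB_len {c : Set (BNode κ)} (hc : IsChain (· ≤ ·) c)
    (hδ : δ < κ.ord) (hcδ : ∀ t ∈ c, t.len ≤ δ) :
    ∃ u ∈ upperBounds c, IsLUB (len '' c) u.len := by
  classical
  have hlub : IsLUB (len '' c) (sSup (len '' c)) := isLUB_csSup' ⟨δ, forall_mem_image.2 hcδ⟩
  have hle : ∀ t ∈ c, t.len ≤ sSup (len '' c) := fun t ht => hlub.1 (mem_image_of_mem _ ht)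
  refine ⟨{ len := sSup (len '' c)
            len_lt := (hlub.2 (forall_mem_image.2 hcδ)).trans_lt hδ
            val := fun i => decide (∃ t ∈ c, t.val i = true)
            val_false := fun i hi => ?_ }, fun t ht => ⟨hle t ht, fun i hi => ?_⟩, hlub⟩
  · simpa using fun t ht => t.val_false i ((hle t ht).trans hi)
  · rw [Bool.eq_iff_iff, decide_eq_true_iff]
    refine ⟨fun ⟨t', ht', hval⟩ => ?_, fun hval => ⟨t, ht, hval⟩⟩
    rcases hc.total ht ht' with h | h
    · rwa [← h.2 i hi]
    · have hi' : i < t'.len := lt_of_not_ge fun hi' => by simp [t'.val_false i hi'] at hval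
      rwa [h.2 i hi']

theorem len_snoc (hκ : ℵ₀ ≤ κ) (s : BNode κ) (b : Bool) : (s.snoc b).len = s.len + 1 := by
  rw [snoc, dif_pos ((isSuccLimit_ord hκ).add_one_lt s.len_lt)]

theorem snoc_val_len (hκ : ℵ₀ ≤ κ) (s : BNode κ) (b : Bool) : (s.snoc b).val s.len = b := by
  simp [snoc, (isSuccLimit_ord hκ).add_one_lt s.len_lt]

theorem lt_snoc (hκ : ℵ₀ ≤ κ) (s : BNode κ) (b : Bool) : s < s.snoc b := by
  refine lt_of_le_not_ge ⟨?_, fun i hi => ?_⟩ fun h => ?_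
  · exact (lt_add_one s.len).le.trans_eq (len_snoc hκ s b).symm
  · simp [snoc, (isSuccLimit_ord hκ).add_one_lt s.len_lt, hi]
  · exact h.1.not_gt ((len_snoc hκ s b).symm ▸ lt_add_one s.len)

theorem snoc_le_of_lt (hκ : ℵ₀ ≤ κ) (h : s < t) : s.snoc (t.val s.len) ≤ t := by
  refine ⟨(len_snoc hκ s _).trans_le (Order.add_one_le_of_lt (len_strictMono h)), fun i hi => ?_⟩
  rw [len_snoc hκ, Order.lt_add_one_iff] at hi
  rcases hi.lt_or_eq with hi | rfl
  · exact (h.le.2 i hi).trans ((lt_snoc hκ s _).le.2 i hi).symm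
  · exact (snoc_val_len hκ s _).symm

end BNode

section Tree

variable {κ : Cardinal.{0}} {p : Set (BNode κ)} {s u : BNode κ}

/-- Closure of a tree under unions of increasing chains of length less than `κ`, literally as in
clause (2) of `IsPerfectTree`. -/
def ChainClosed (p : Set (BNode κ)) : Prop :=
  ∀ η : Ordinal.{0}, η < κ.ord → ∀ f : Ordinal.{0} → BNode κ,
    (∀ α β, α < β → β < η → (f α).Ext (f β)) →
    (∀ α, α < η → f α ∈ p) →
    ∀ u : BNode κ, (∀ α, α < η → (f α).Ext u) →
      (∀ i, i < u.len → ∃ α, α < η ∧ i < (f α).len) → u ∈ p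

theorem ChainClosed.mem_of_isLUB_len (hchain : ChainClosed p) (hlower : IsLowerSet p)
    {c : Set (BNode κ)} (hcp : c ⊆ p) (hu : u ∈ upperBounds c)
    (hlub : IsLUB (BNode.len '' c) u.len) : u ∈ p := by
  refine hchain u.len u.len_lt (fun α => u.take (α + 1))
    (fun α β hαβ _ => u.take_mono (add_le_add_left hαβ.le 1)) (fun α hα => ?_)
    u (fun α _ => u.take_le _) fun i hi => ⟨i, hi, lt_min (lt_add_one i) hi⟩
  obtain ⟨_, ⟨t, ht, rfl⟩, hαt⟩ := (lt_isLUB_iff hlub).1 hα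
  exact hlower (BNode.take_le_of_le (hu ht) (Order.add_one_le_of_lt hαt)) (hcp ht)

theorem exists_le_len_eq (hκ : ℵ₀ ≤ κ) (hlower : IsLowerSet p) (hchain : ChainClosed p)
    (hsnoc : ∀ s ∈ p, ∃ b, s.snoc b ∈ p) (hs : s ∈ p) {δ : Ordinal.{0}} (hδ : δ < κ.ord)
    (hsδ : s.len ≤ δ) : ∃ t ∈ p, s ≤ t ∧ t.len = δ := by
  obtain ⟨m, hsm, ⟨hmp, hmδ⟩, hmax⟩ :
      ∃ m, s ≤ m ∧ Maximal (· ∈ {t | t ∈ p ∧ t.len ≤ δ}) m := by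
    refine zorn_le_nonempty₀ _ (fun c hcp hc _ _ => ?_) s ⟨hs, hsδ⟩
    obtain ⟨u, hu, hlub⟩ := BNode.exists_mem_upperBounds_isLUB_len hc hδ fun t ht => (hcp ht).2
    exact ⟨u, ⟨hchain.mem_of_isLUB_len hlower (fun t ht => (hcp ht).1) hu hlub,
      hlub.2 (forall_mem_image.2 fun t ht => (hcp ht).2)⟩, hu⟩
  refine ⟨m, hmp, hsm, hmδ.eq_of_not_lt fun hlt => ?_⟩
  obtain ⟨b, hb⟩ := hsnoc m hmp
  have hlen : (m.snoc b).len ≤ δ := (BNode.len_snoc hκ m b).trans_le (Order.add_one_le_of_lt hlt)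
  have hm : m < m.snoc b := BNode.lt_snoc hκ m b
  exact hm.not_ge (hmax ⟨hb, hlen⟩ hm.le)

theorem isPerfectTree_iff_exists_snoc_mem (hκ : ℵ₀ ≤ κ) :
    IsPerfectTree p ↔ IsLowerSet p ∧ ChainClosed p ∧ (∀ s ∈ p, ∃ b, s.snoc b ∈ p) ∧
      ∃ C, IsSplitClub p C := by
  constructor
  · rintro ⟨hlower, hchain, hsplit, hclub⟩
    refine ⟨fun t s hst ht => hlower t ht s hst, hchain, fun s hs => ?_, hclub⟩
    obtain ⟨t, ht, hst, htsplit⟩ := hsplit s hs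
    rcases (show s ≤ t from hst).lt_or_eq with hlt | rfl
    · exact ⟨_, hlower t ht _ (BNode.snoc_le_of_lt hκ hlt)⟩
    · exact ⟨false, htsplit.1⟩
  · rintro ⟨hlower, hchain, hsnoc, C, hclub⟩
    refine ⟨fun t ht s hst => hlower hst ht, hchain, fun s hs => ?_, C, hclub⟩
    obtain ⟨c, hc, hsc⟩ := hclub.1.2.2 s.len s.len_lt
    obtain ⟨t, ht, hst, rfl⟩ :=
      exists_le_len_eq hκ hlower hchain hsnoc hs (hclub.1.1 c hc) hsc.le
    exact ⟨t, ht, hst, (hclub.2 t ht).2 hc⟩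

theorem IsSplitClub.splitClub_subset {D : Set Ordinal.{0}} (hD : IsSplitClub p D) :
    splitClub p ⊆ D := by
  rintro _ ⟨s, hs, rfl, hsplit⟩
  exact (hD.2 s hs).1 hsplit

end Tree

section Prune

variable {κ : Cardinal.{0}} {q : Set (BNode κ)} {C D E : Set Ordinal.{0}} {s : BNode κ}

/-- The subtree of `q` of all nodes that turn left at every level in `E`; it destroys the splitting
of `q` at the levels in `E`. -/
def pruneTree (q : Set (BNode κ)) (E : Set Ordinal.{0}) : Set (BNode κ) :=
  {s ∈ q | ∀ i < s.len, i ∈ E → s.val i = false}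

theorem pruneTree_subset (q : Set (BNode κ)) (E : Set Ordinal.{0}) : pruneTree q E ⊆ q :=
  sep_subset _ _

theorem isLowerSet_pruneTree (hq : IsLowerSet q) : IsLowerSet (pruneTree q E) :=
  fun _ _ hst ht => ⟨hq hst ht.1, fun i hi hiE =>
    (hst.2 i hi).symm.trans (ht.2 i (hi.trans_le hst.1) hiE)⟩

theorem chainClosed_pruneTree (hq : ChainClosed q) : ChainClosed (pruneTree q E) := by
  refine fun η hη f hf hfq u hu hlen =>
    ⟨hq η hη f hf (fun α hα => (hfq α hα).1) u hu hlen, fun i hi hiE => ?_⟩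
  obtain ⟨α, hα, hiα⟩ := hlen i hi
  exact ((hu α hα).2 i hiα).trans ((hfq α hα).2 i hiα hiE)

theorem snoc_mem_pruneTree_iff (hκ : ℵ₀ ≤ κ) (hs : s ∈ pruneTree q E) {b : Bool} :
    s.snoc b ∈ pruneTree q E ↔ s.snoc b ∈ q ∧ (s.len ∈ E → b = false) := by
  refine and_congr_right fun _ => ⟨fun h hsE => ?_, fun h i hi hiE => ?_⟩
  · rw [← BNode.snoc_val_len hκ s b]
    exact h _ (BNode.len_strictMono (BNode.lt_snoc hκ s b)) hsE
  · rw [BNode.len_snoc hκ, Order.lt_add_one_iff] at hi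
    rcases hi.lt_or_eq with hi | rfl
    · exact ((BNode.lt_snoc hκ s b).le.2 i hi).trans (hs.2 i hi hiE)
    · exact (BNode.snoc_val_len hκ s b).trans (h hiE)

theorem splits_pruneTree_iff (hκ : ℵ₀ ≤ κ) (hs : s ∈ pruneTree q E) :
    Splits (pruneTree q E) s ↔ Splits q s ∧ s.len ∉ E := by
  simp only [Splits, snoc_mem_pruneTree_iff hκ hs, implies_true, and_true, Bool.true_eq_false,
    imp_false, and_assoc]

theorem isSplitClub_pruneTree (hκ : ℵ₀ ≤ κ) (hD : IsSplitClub q D)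
    (hclub : IsClubIn κ.ord (D \ E)) : IsSplitClub (pruneTree q E) (D \ E) :=
  ⟨hclub, fun s hs => (splits_pruneTree_iff hκ hs).trans (and_congr_left' (hD.2 s hs.1))⟩

theorem isPerfectTree_pruneTree (hκ : ℵ₀ ≤ κ) (hq : IsPerfectTree q) (hD : IsSplitClub q D)
    (hED : E ⊆ D) (hclub : IsClubIn κ.ord (D \ E)) : IsPerfectTree (pruneTree q E) := by
  rw [isPerfectTree_iff_exists_snoc_mem hκ] at hq ⊢
  obtain ⟨hlower, hchain, hsnoc, -⟩ := hq
  refine ⟨isLowerSet_pruneTree hlower, chainClosed_pruneTree hchain, fun s hs => ?_,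
    _, isSplitClub_pruneTree hκ hD hclub⟩
  simp only [snoc_mem_pruneTree_iff hκ hs]
  by_cases hsE : s.len ∈ E
  · exact ⟨false, ((hD.2 s hs.1).2 (hED hsE)).1, fun _ => rfl⟩
  · obtain ⟨b, hb⟩ := hsnoc s hs.1
    exact ⟨b, hb, fun h => absurd h hsE⟩

theorem IsPerfectTree.exists_subset_splitClub_subset (hκ : ℵ₀ < κ.ord.cof) (hq : IsPerfectTree q)
    (hC : IsClubIn κ.ord C) : ∃ p ⊆ q, IsPerfectTree p ∧ splitClub p ⊆ C := by
  have hκ' : ℵ₀ ≤ κ := hκ.le.trans (Ordinal.cof_ord_le κ)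
  obtain ⟨D, hD⟩ := hq.2.2.2
  have hclub : IsClubIn κ.ord (D \ (D \ C)) := by
    rw [sdiff_sdiff_right_self]
    exact hD.1.inter hκ.ne' hC
  refine ⟨pruneTree q (D \ C), pruneTree_subset _ _,
    isPerfectTree_pruneTree hκ' hq hD sdiff_subset hclub, ?_⟩
  calc splitClub (pruneTree q (D \ C))
      ⊆ D \ (D \ C) := (isSplitClub_pruneTree hκ' hD hclub).splitClub_subset
    _ ⊆ C := sdiff_sdiff_le

end Prune

section SacksCond

variable {κ lam : Cardinal.{0}} {S : Set Ordinal.{0}} {q r : Ordinal.{0} → Set (BNode κ)}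

theorem SacksCond.piecewise [DecidablePred (· ∈ S)] (hκ : ℵ₀ ≤ κ) (hq : SacksCond κ lam q)
    (hr : ∀ ξ ∈ S, IsPerfectTree (r ξ)) (hS : S ⊆ Iio lam.ord)
    (hScard : #S ≤ Cardinal.lift.{1} κ) : SacksCond κ lam (S.piecewise r q) := by
  obtain ⟨hperfect, huniv, hsupp⟩ := hq
  refine ⟨fun α hα => ?_, fun α hα => ?_, ?_⟩
  · by_cases hαS : α ∈ S
    · simpa only [piecewise_eq_of_mem _ _ _ hαS] using hr α hαS
    · simpa only [piecewise_eq_of_notMem _ _ _ hαS] using hperfect α hα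
  · rw [piecewise_eq_of_notMem _ _ _ fun hαS => hα (hS hαS), huniv α hα]
  · calc #{α | α < lam.ord ∧ S.piecewise r q α ≠ Set.univ}
        ≤ #(S ∪ {α | α < lam.ord ∧ q α ≠ Set.univ} : Set Ordinal.{0}) := by
          refine mk_le_mk_of_subset fun α hα => or_iff_not_imp_left.2 fun hαS => ?_
          rwa [mem_ofPred_eq, piecewise_eq_of_notMem _ _ _ hαS] at hα
      _ ≤ #S + #{α | α < lam.ord ∧ q α ≠ Set.univ} := mk_union_le _ _
      _ ≤ Cardinal.lift.{1} κ := add_le_of_le (aleph0_le_lift.2 hκ) hScard hsupp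

theorem SacksCond.exists_sacksLe_forall_mem (hκ : ℵ₀ ≤ κ) {P : Set (BNode κ) → Prop}
    (hP : ∀ t, IsPerfectTree t → ∃ p ⊆ t, IsPerfectTree p ∧ P p) (hq : SacksCond κ lam q)
    (hS : S ⊆ Iio lam.ord) (hScard : #S ≤ Cardinal.lift.{1} κ) :
    ∃ p, SacksCond κ lam p ∧ SacksLe lam p q ∧ ∀ ξ ∈ S, P (p ξ) := by
  classical
  have hthin : ∀ ξ ∈ S, ∃ p ⊆ q ξ, IsPerfectTree p ∧ P p := fun ξ hξ => hP _ (hq.1 ξ (hS hξ))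
  choose! r hrq hr hrP using hthin
  refine ⟨S.piecewise r q, hq.piecewise hκ hr hS hScard, fun α _ => ?_, fun ξ hξ => ?_⟩
  · exact piecewise_le (g := q) hrq (fun _ _ => le_rfl) α
  · rw [piecewise_eq_of_mem _ _ _ hξ]
    exact hrP ξ hξ

end SacksCond

theorem sacksProd_dense_splitClub_general {κ lam : Cardinal.{0}} (hκ : ℵ₀ < κ.ord.cof)
    {C : Set Ordinal.{0}} (hC : IsClubIn κ.ord C) {S : Set Ordinal.{0}} (hS : S ⊆ Iio lam.ord)
    (hScard : #S ≤ Cardinal.lift.{1} κ) {q : Ordinal.{0} → Set (BNode κ)}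
    (hq : SacksCond κ lam q) :
    ∃ p, SacksCond κ lam p ∧ SacksLe lam p q ∧ ∀ ξ ∈ S, splitClub (p ξ) ⊆ C :=
  hq.exists_sacksLe_forall_mem (hκ.le.trans (Ordinal.cof_ord_le κ))
    (fun _ ht => ht.exists_subset_splitClub_subset hκ hC) hS hScard

/-- For every club `C ⊆ κ` and every `S ⊆ λ` with `|S| ≤ κ`, the set
of conditions `p` in `Sacks(κ,λ)` such that `C(p ξ) ⊆ C` for every `ξ ∈ S` is dense. -/
theorem sacksProd_dense_splitClub (κ lam : Cardinal.{0}) (hκ : κ.IsInaccessible)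
    (C : Set Ordinal.{0}) (hC : IsClubIn κ.ord C)
    (S : Set Ordinal.{0}) (hS : S ⊆ Set.Iio lam.ord)
    (hScard : #S ≤ Cardinal.lift.{1} κ)
    (q : Ordinal.{0} → Set (BNode κ)) (hq : SacksCond κ lam q) :
    ∃ p, SacksCond κ lam p ∧ SacksLe lam p q ∧
      ∀ ξ ∈ S, splitClub (p ξ) ⊆ C :=
  sacksProd_dense_splitClub_general (hκ.isRegular.cof_ord.symm ▸ hκ.aleph0_lt) hC hS hScard hq
end
end

section
/- Let I be a set, μ an infinite cardinal, and for each i ∈ I let Q_i be a partial order with a greatest element 1_i that is almost homogeneous. Then the ≤μ-support product of the Q_i — the poset of functions p with p(i) ∈ Q_i for each i ∈ I and |{i ∈ I : p(i) ≠ 1_i}| ≤ μ, ordered pointwise — is almost homogeneous. -/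
open Set Cardinal

noncomputable section

universe u v

/-!
Given `p` and `q`, apply on each coordinate an automorphism witnessing almost homogeneity, but take
the identity wherever `p` and `q` agree. Any two conditions of the product agree off a small set of
coordinates, so the resulting automorphism of the full product moves only a small set of
coordinates and therefore restricts to conditions of small support. Smallness is expressed by the
filter of complements of small sets: for supports of size at most `μ` it is the filter of sets whose
complement has size less than `succ μ`.
-/

/-- The order isomorphism of dependent products acting by `e i` on coordinate `i`. -/
def piOrderIso {ι : Type*} {α β : ι → Type*} [∀ i, LE (α i)] [∀ i, LE (β i)]
    (e : ∀ i, α i ≃o β i) : (∀ i, α i) ≃o ∀ i, β i where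
  toEquiv := Equiv.piCongrRight fun i => (e i).toEquiv
  map_rel_iff' := forall_congr' fun i => (e i).le_iff_le

/-- The restriction of an order isomorphism to subtypes that correspond under it. -/
def subtypeOrderIso {α β : Type*} [LE α] [LE β] {P : α → Prop} {R : β → Prop}
    (e : α ≃o β) (h : ∀ a, P a ↔ R (e a)) : {a // P a} ≃o {b // R b} where
  toEquiv := e.toEquiv.subtypeEquiv h
  map_rel_iff' := e.le_iff_le

theorem eventually_piOrderIso_eq_iff {ι : Type*} {α : ι → Type*} [∀ i, LE (α i)] {l : Filter ι}
    {f : ∀ i, α i ≃o α i} (hf : ∀ᶠ i in l, f i = OrderIso.refl (α i)) (x a : ∀ i, α i) :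
    (∀ᶠ i in l, piOrderIso f x i = a i) ↔ ∀ᶠ i in l, x i = a i :=
  Filter.eventually_congr <| hf.mono fun i hi => by
    change f i (x i) = a i ↔ x i = a i
    rw [hi, OrderIso.refl_apply]

theorem AlmostHomogeneous.exists_orderIso_eq_refl_of_eq {P : Type*} [Preorder P]
    (hP : AlmostHomogeneous P) (p q : P) :
    ∃ f : P ≃o P, ∃ r, r ≤ f p ∧ r ≤ q ∧ (p = q → f = OrderIso.refl P ∧ r = q) := by
  by_cases hpq : p = q
  · exact ⟨OrderIso.refl P, q, hpq.ge, le_rfl, fun _ => ⟨rfl, rfl⟩⟩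
  · obtain ⟨f, r, hrp, hrq⟩ := hP p q
    exact ⟨f, r, hrp, hrq, fun h => absurd h hpq⟩

theorem almostHomogeneous_product_general {I : Type*} (l : Filter I) (Q : I → Type*)
    [∀ i, Preorder (Q i)] (hQ : ∀ i, AlmostHomogeneous (Q i)) (a : ∀ i, Q i) :
    AlmostHomogeneous {p : ∀ i, Q i // ∀ᶠ i in l, p i = a i} := by
  rintro ⟨p, hp⟩ ⟨q, hq⟩
  choose f r hrp hrq hfr using fun i => (hQ i).exists_orderIso_eq_refl_of_eq (p i) (q i)
  have hpq : ∀ᶠ i in l, p i = q i := hp.mp <| hq.mono fun i hqi hpi => hpi.trans hqi.symm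
  have hf : ∀ᶠ i in l, f i = OrderIso.refl (Q i) := hpq.mono fun i h => (hfr i h).1
  have hr : ∀ᶠ i in l, r i = a i := hpq.mp <| hq.mono fun i hqi h => (hfr i h).2.trans hqi
  exact ⟨subtypeOrderIso (piOrderIso f) fun x => (eventually_piOrderIso_eq_iff hf x a).symm,
    ⟨r, hr⟩, hrp, hrq⟩

/-- The `≤μ`-support product of almost homogeneous partial orders with
greatest elements is almost homogeneous. -/
theorem almostHomogeneous_product {I : Type u} (μ : Cardinal.{u}) (hμ : ℵ₀ ≤ μ)
    (Q : I → Type v) [∀ i, PartialOrder (Q i)] [∀ i, OrderTop (Q i)]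
    (hQ : ∀ i, AlmostHomogeneous (Q i)) :
    AlmostHomogeneous {p : ∀ i, Q i // #{i | p i ≠ ⊤} ≤ μ} := by
  convert almostHomogeneous_product_general (.cocardinal I (isRegular_succ hμ)) Q hQ fun _ => ⊤
  all_goals exact Order.lt_succ_iff.symm
end
end
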